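/- For every finite rooted tree τ, the sum of squared branch sizes is at least the sum of squared distances: ∑_{v∈τ} b(v)² ≥ ∑_{v∈τ} d(v)². -/

import Mathlib

/-- Branch size of `v` in a tree with root `R`: the number of vertices `w` whose unique path
to `R` passes through `v` (i.e. the size of the subtree rooted at `v`). -/
noncomputable def branchSize {V : Type*} (G : SimpleGraph V) (R v : V) : ℕ :=
  ({w : V | G.dist w R = G.dist w v + G.dist v R} : Set V).ncard

/-- Distance number of `v`: the number of vertices on the path from `v` to the root `R`,
including both endpoints. -/
noncomputable def distNum {V : Type*} (G : SimpleGraph V) (R v : V) : ℕ :=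
  G.dist v R + 1

theorem SimpleGraph.Connected.exists_dist_eq_and_dist_add_dist_eq {V : Type*}
    {G : SimpleGraph V} (hG : G.Connected) {u v : V} {k : ℕ} (hk : k ≤ G.dist u v) :
    ∃ w, G.dist u w = k ∧ G.dist u w + G.dist w v = G.dist u v := by
  obtain ⟨p, hp⟩ := hG.exists_walk_length_eq_dist u v
  have htake := SimpleGraph.dist_le (p.take k)
  have hdrop := SimpleGraph.dist_le (p.drop k)
  have htri := hG.dist_triangle (u := u) (v := p.getVert k) (w := v)
  rw [SimpleGraph.Walk.take_length] at htake
  rw [SimpleGraph.Walk.drop_length] at hdrop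
  exact ⟨p.getVert k, by omega, by omega⟩

theorem Finset.sum_two_mul_add_one_le_card_sq {α : Type*} (s : Finset α) (f : α → ℕ)
    (hf : ∀ v ∈ s, ∀ k < f v, ∃ u ∈ s, f u = k) :
    ∑ v ∈ s, (2 * f v + 1) ≤ s.card ^ 2 := by
  classical
  have hcount : ∀ v ∈ s, f v ≤ ∑ u ∈ s, if f u < f v then 1 else 0 := by
    intro v hv
    rw [← Finset.card_filter]
    calc f v = (Finset.range (f v)).card := (Finset.card_range _).symm
      _ ≤ ((s.filter fun u => f u < f v).image f).card := by
        refine Finset.card_le_card fun k hk => ?_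
        rw [Finset.mem_range] at hk
        obtain ⟨u, hu, rfl⟩ := hf v hv k hk
        exact Finset.mem_image_of_mem f (Finset.mem_filter.2 ⟨hu, hk⟩)
      _ ≤ _ := Finset.card_image_le
  have hsum := Finset.sum_le_sum hcount
  have hpairs : ∑ v ∈ s, ∑ u ∈ s, ((if f u < f v then 1 else 0) +
      (if f v < f u then 1 else 0) + if v = u then 1 else 0) ≤ ∑ v ∈ s, ∑ u ∈ s, 1 := by
    refine Finset.sum_le_sum fun v _ => Finset.sum_le_sum fun u _ => ?_
    grind
  have hcomm : ∑ v ∈ s, ∑ u ∈ s, (if f v < f u then 1 else 0) =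
      ∑ v ∈ s, ∑ u ∈ s, if f u < f v then 1 else 0 := Finset.sum_comm
  have hdiag : ∑ v ∈ s, ∑ u ∈ s, (if v = u then 1 else 0) = s.card := by simp
  simp only [Finset.sum_add_distrib] at hpairs
  rw [hcomm, hdiag] at hpairs
  simp only [Finset.sum_add_distrib, ← Finset.mul_sum, Finset.sum_const, smul_eq_mul,
    mul_one] at hpairs ⊢
  rw [sq]
  omega

theorem SimpleGraph.Connected.sum_two_mul_dist_add_one_le {V : Type*} [Fintype V]
    {G : SimpleGraph V} (hG : G.Connected) (R a : V) :
    ∑ v : V with G.dist v R = G.dist v a + G.dist a R, (2 * G.dist v a + 1) ≤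
      branchSize G R a ^ 2 := by
  rw [branchSize, Set.ncard_eq_toFinset_card', Set.toFinset_ofPred]
  refine Finset.sum_two_mul_add_one_le_card_sq _ _ fun v hv k hk => ?_
  rw [Finset.mem_filter] at hv
  obtain ⟨u, hu, huv⟩ := hG.exists_dist_eq_and_dist_add_dist_eq
    (u := v) (v := a) (k := G.dist v a - k) (by omega)
  have hvuR := hG.dist_triangle (u := v) (v := u) (w := R)
  have huaR := hG.dist_triangle (u := u) (v := a) (w := R)
  exact ⟨u, by simp; omega, by omega⟩

theorem SimpleGraph.Connected.distNum_sq_le {V : Type*} [Fintype V]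
    {G : SimpleGraph V} (hG : G.Connected) (R v : V) :
    distNum G R v ^ 2 ≤
      ∑ a : V with G.dist v R = G.dist v a + G.dist a R, (2 * G.dist v a + 1) := by
  classical
  set s := Finset.univ.filter fun a => G.dist v R = G.dist v a + G.dist a R
  have hodd : ∀ n : ℕ, n ^ 2 = ∑ k ∈ Finset.range n, (2 * k + 1) := by
    intro n
    induction n with
    | zero => simp
    | succ n ih => rw [Finset.sum_range_succ, ← ih]; ring
  have hsub : Finset.range (distNum G R v) ⊆ s.image (G.dist v) := by
    intro k hk
    rw [Finset.mem_range, distNum] at hk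
    obtain ⟨w, rfl, hw⟩ := hG.exists_dist_eq_and_dist_add_dist_eq (Nat.lt_succ_iff.1 hk)
    exact Finset.mem_image_of_mem _ (by simp [s, hw])
  rw [hodd]
  exact (Finset.sum_le_sum_of_subset hsub).trans
    (Finset.sum_image_le_of_nonneg (f := fun k => 2 * k + 1) fun _ _ => Nat.zero_le _)

theorem sum_sq_dist_le_sum_sq_branch {V : Type*} [Fintype V] (G : SimpleGraph V)
    (hG : G.IsTree) (R : V) :
    ∑ v : V, (distNum G R v) ^ 2 ≤ ∑ v : V, (branchSize G R v) ^ 2 := by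
  have hconn := hG.connected
  calc ∑ v : V, distNum G R v ^ 2
      ≤ ∑ v : V, ∑ a : V with G.dist v R = G.dist v a + G.dist a R, (2 * G.dist v a + 1) :=
        Finset.sum_le_sum fun v _ => hconn.distNum_sq_le R v
    _ = ∑ a : V, ∑ v : V with G.dist v R = G.dist v a + G.dist a R, (2 * G.dist v a + 1) := by
        simp only [Finset.sum_filter]
        exact Finset.sum_comm
    _ ≤ ∑ a : V, branchSize G R a ^ 2 :=
        Finset.sum_le_sum fun a _ => hconn.sum_two_mul_dist_add_one_le R a
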